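/- arXiv:2303.04375 — 4 statements merged into one kernel-verified Lean document; each statement's English description precedes it below -/
import Mathlib

section
/- Let J be a finite index set, for each j ∈ J let K_j be a finite index set, and for each j ∈ J and k ∈ K_j let L_{jk} be a nonempty finite index set. Let x^LB, x^UB ∈ ℝⁿ. Suppose the point (x, u, v, y, w) — with x ∈ ℝⁿ, u_j ∈ ℝⁿ for j ∈ J, v_{jkl} ∈ ℝⁿ, y_j ∈ ℝ with 0 ≤ y_j ≤ 1, and w_{jkl} ∈ ℝ with 0 ≤ w_{jkl} ≤ 1 — satisfies the continuous relaxation of the hull reformulation of the 2-level nested GDP (for a single outer disjunction): (i) Σ_{j∈J} u_j = x; (ii) Σ_{l∈L_{jk}} v_{jkl} = u_j for all j ∈ J, k ∈ K_j; (iii) y_j·x^LB ≤ u_j ≤ y_j·x^UB componentwise for all j; (iv) w_{jkl}·x^LB ≤ v_{jkl} ≤ w_{jkl}·x^UB componentwise for all j, k, l; (v) Σ_{j∈J} y_j = 1; (vi) Σ_{l∈L_{jk}} w_{jkl} = y_j for all j, k. Then, defining the slack variables w⁰_{jk} := 1 − y_j and v⁰_{jk} := x − u_j, the point satisfies every constraint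 of the continuous relaxation of the hull reformulation of the equivalent single-level GDP that is not already among (i)–(vi), namely: v⁰_{jk} + Σ_{l∈L_{jk}} v_{jkl} = x for all j, k; w⁰_{jk}·x^LB ≤ v⁰_{jk} ≤ w⁰_{jk}·x^UB componentwise for all j, k; w⁰_{jk} + Σ_{l∈L_{jk}} w_{jkl} = 1 for all j, k; and 0 ≤ w⁰_{jk} ≤ 1 for all j, k. Consequently the feasible region of the continuous relaxation of the hull reformulation of the nested GDP is contained in that of its equivalent single-level GDP representation (Theorem 1, 2-level case). -/
/-- Theorem 1 (2-level case), feasibility part: any point of the continuous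
relaxation of the hull reformulation of the 2-level nested GDP, augmented with
the slack variables `w⁰_{jk} = 1 - y j` and `v⁰_{jk} = x - u j`, satisfies all
the additional constraints of the continuous relaxation of the hull
reformulation of the equivalent single-level GDP. -/
theorem nested_hull_subset_equivalent_hull
    {n : ℕ} {J : Type*} [Fintype J]
    {K : J → Type*} [∀ j, Fintype (K j)]
    {L : ∀ j, K j → Type*} [∀ j k, Fintype (L j k)] [∀ j k, Nonempty (L j k)]
    (xLB xUB : Fin n → ℝ)
    (x : Fin n → ℝ) (u : J → Fin n → ℝ)
    (v : ∀ j, ∀ k : K j, L j k → Fin n → ℝ)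
    (y : J → ℝ) (w : ∀ j, ∀ k : K j, L j k → ℝ)
    (hy0 : ∀ j, 0 ≤ y j) (hy1 : ∀ j, y j ≤ 1)
    (hw0 : ∀ j k l, 0 ≤ w j k l) (hw1 : ∀ j k l, w j k l ≤ 1)
    (h1 : ∑ j, u j = x)
    (h2 : ∀ j (k : K j), ∑ l, v j k l = u j)
    (h3 : ∀ j, y j • xLB ≤ u j ∧ u j ≤ y j • xUB)
    (h4 : ∀ j (k : K j) (l : L j k), w j k l • xLB ≤ v j k l ∧ v j k l ≤ w j k l • xUB)
    (h5 : ∑ j, y j = 1)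
    (h6 : ∀ j (k : K j), ∑ l, w j k l = y j) :
    ∀ j (k : K j),
      ((x - u j) + ∑ l, v j k l = x) ∧
      ((1 - y j) • xLB ≤ x - u j ∧ x - u j ≤ (1 - y j) • xUB) ∧
      ((1 - y j) + ∑ l, w j k l = 1) ∧
      (0 ≤ 1 - y j ∧ 1 - y j ≤ 1) := by
  classical
  intro j k
  have hu : x - u j = ∑ i ∈ Finset.univ.erase j, u i := by
    rw [← h1, ← Finset.add_sum_erase Finset.univ u (Finset.mem_univ j)]
    exact add_sub_cancel_left _ _
  have hy : 1 - y j = ∑ i ∈ Finset.univ.erase j, y i := by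
    rw [← h5, ← Finset.add_sum_erase Finset.univ y (Finset.mem_univ j)]
    exact add_sub_cancel_left _ _
  refine ⟨?_, ⟨?_, ?_⟩, ?_, ?_, ?_⟩
  · rw [h2, sub_add_cancel]
  · rw [hu, hy, Finset.sum_smul]
    exact Finset.sum_le_sum fun i _ => (h3 i).1
  · rw [hu, hy, Finset.sum_smul]
    exact Finset.sum_le_sum fun i _ => (h3 i).2
  · rw [h6, sub_add_cancel]
  · linarith [hy1 j]
  · linarith [hy0 j]
end

section
/- Let J be a finite index set, let x^LB, x^UB ∈ ℝⁿ, let y : J → ℝ satisfy Σ_{j∈J} y_j = 1, and let u : J → ℝⁿ satisfy y_{j'}·x^LB ≤ u_{j'} ≤ y_{j'}·x^UB componentwise for every j' ∈ J. Fix j ∈ J, let x := Σ_{j'∈J} u_{j'}, let L be a finite index set, and let v : L → ℝⁿ satisfy Σ_{l∈L} v_l = u_j. Then (1 − y_j)·x^LB ≤ x − Σ_{l∈L} v_l ≤ (1 − y_j)·x^UB componentwise; that is, the slack disaggregated variable v⁰ := x − Σ_{l∈L} v_l of the equivalent single-level hull reformulation automatically satisfies its indicator-scaled bounds with indicator w⁰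 = 1 − y_j. -/
/-- The slack disaggregated variable `v⁰ = x - ∑ l, v l` of the equivalent
single-level hull reformulation automatically satisfies its indicator-scaled
bounds with indicator `w⁰ = 1 - y j` (equations (1)–(4) of the proof of
Theorem 1). -/
theorem slack_disaggregated_bounds
    {n : ℕ} {J : Type*} [Fintype J] {L : Type*} [Fintype L]
    (xLB xUB : Fin n → ℝ) (y : J → ℝ) (u : J → Fin n → ℝ)
    (hy : ∑ j, y j = 1)
    (hub : ∀ j', y j' • xLB ≤ u j' ∧ u j' ≤ y j' • xUB)
    (j : J) (v : L → Fin n → ℝ)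
    (hv : ∑ l, v l = u j) :
    (1 - y j) • xLB ≤ (∑ j', u j') - ∑ l, v l ∧
      (∑ j', u j') - ∑ l, v l ≤ (1 - y j) • xUB := by
  classical
  have h1 : 1 - y j = ∑ i ∈ Finset.univ.erase j, y i := by
    rw [← hy, ← Finset.add_sum_erase _ _ (Finset.mem_univ j)]
    ring
  have h2 : (∑ i, u i) - u j = ∑ i ∈ Finset.univ.erase j, u i := by
    rw [← Finset.add_sum_erase _ _ (Finset.mem_univ j)]
    exact add_sub_cancel_left _ _
  rw [hv, h2, h1, Finset.sum_smul, Finset.sum_smul]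
  exact ⟨Finset.sum_le_sum fun i _ => (hub i).1, Finset.sum_le_sum fun i _ => (hub i).2⟩
end

section
/- Let J be a finite index set, for each j ∈ J let K_j be a finite index set, and for each j, k let L_{jk} be a nonempty finite index set. Let x ∈ ℝⁿ, let h_{jkl} : ℝⁿ → ℝ be arbitrary functions, and let m_{jkl}, m'_{jkl} ∈ ℝ satisfy m'_{jkl} ≤ m_{jkl}; set M'_{jkl} := m_{jkl} − m'_{jkl}. Let y_j ∈ [0,1] and w_{jkl} ∈ [0,1] satisfy w_{jkl} ≥ 0 and Σ_{l∈L_{jk}} w_{jkl} = y_j for all j, k. If the nested Big-M constraints h_{jkl}(x) ≤ m'_{jkl}·(1 − w_{jkl}) + M'_{jkl}·(1 − y_j) hold for all j, k, l, then the single-level Big-M constraints h_{jkl}(x) ≤ m_{jkl}·(1 − w_{jkl}) hold for all j, k, l. Consequently, since all other constraints of the two relaxations coincide, the feasible region of the continuous relaxation of the Big-M reformulation of the 2-level nested GDP (with tight M values, for which m'_{jkl} ≤ m_{jkl}) is contained in that of the Big-M reformulation of its equivalent single-level GDP representation (Theorem 2, 2-level case). -/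
/-- Theorem 2 (2-level case): with tight M values (`m' ≤ m` and
`M' = m - m'`), every point of the continuous relaxation of the Big-M
reformulation of the 2-level nested GDP satisfies the Big-M constraints of the
equivalent single-level GDP. -/
theorem nested_bigM_subset_equivalent_bigM
    {n : ℕ} {J : Type*} [Fintype J]
    {K : J → Type*} [∀ j, Fintype (K j)]
    {L : ∀ j, K j → Type*} [∀ j k, Fintype (L j k)] [∀ j k, Nonempty (L j k)]
    (x : Fin n → ℝ)
    (h : ∀ j, ∀ k : K j, L j k → (Fin n → ℝ) → ℝ)
    (m m' : ∀ j, ∀ k : K j, L j k → ℝ)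
    (hmm : ∀ j (k : K j) (l : L j k), m' j k l ≤ m j k l)
    (y : J → ℝ) (w : ∀ j, ∀ k : K j, L j k → ℝ)
    (hy0 : ∀ j, 0 ≤ y j) (hy1 : ∀ j, y j ≤ 1)
    (hw0 : ∀ j (k : K j) (l : L j k), 0 ≤ w j k l)
    (hw1 : ∀ j (k : K j) (l : L j k), w j k l ≤ 1)
    (hlink : ∀ j (k : K j), ∑ l, w j k l = y j)
    (hnested : ∀ j (k : K j) (l : L j k),
      h j k l x ≤ m' j k l * (1 - w j k l) + (m j k l - m' j k l) * (1 - y j)) :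
    ∀ j (k : K j) (l : L j k), h j k l x ≤ m j k l * (1 - w j k l) := by
  intro j k l
  have hwy : w j k l ≤ y j := by
    rw [← hlink j k]
    exact Finset.single_le_sum (f := fun l => w j k l)
      (fun i _ => hw0 j k i) (Finset.mem_univ l)
  have h1 := mul_nonneg (sub_nonneg.mpr (hmm j k l)) (sub_nonneg.mpr hwy)
  have h2 := hnested j k l
  linarith
end

section
/- Let J be a finite index set, for each j ∈ J let K_j be a finite index set, and for each j, k let L_{jk} be a nonempty finite index set. Let x^LB, x^UB ∈ ℝⁿ, let X := {x ∈ ℝⁿ : x^LB ≤ x ≤ x^UB} (componentwise), and let G_j ⊆ ℝⁿ and H_{jkl} ⊆ ℝⁿ be arbitrary sets. Define the feasible set of the 2-level nested GDP as F₁ := {x ∈ X : ∃ j ∈ J, x ∈ G_j and ∀ k ∈ K_j, ∃ l ∈ L_{jk}, x ∈ H_{jkl}}, and the feasible set of the equivalent single-level GDP as F₂ := {x ∈ X : ∃ Y : J → Bool and W assigning a Boolean to each triple (j, k, l) with l ∈ L_{jk} ∪ {slack}, such that exactly one j ∈ J has Y_j = true; for each j ∈ J and k ∈ K_j exactly one element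 of L_{jk} ∪ {slack} has W true; for each j, k, the number of l ∈ L_{jk} (excluding the slack) with W_{jkl} = true equals 1 if Y_j = true and 0 otherwise; Y_j = true implies x ∈ G_j; W_{jkl} = true with l ∈ L_{jk} implies x ∈ H_{jkl}; and W_{jk,slack} = true implies x ∈ X}. Then F₁ = F₂; i.e., the equivalent single-level GDP is logically equivalent to the nested GDP (they have the same feasible region in x). -/
/-- The equivalent single-level GDP is logically equivalent to the 2-level
nested GDP: they have the same feasible region in `x`. The slack disjunct of
each extracted inner disjunction is modeled as `none : Option (L j k)`. -/
theorem nested_eq_equivalent_single_level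
    {n : ℕ} {J : Type*} [Fintype J] [DecidableEq J]
    {K : J → Type*} [∀ j, Fintype (K j)]
    {L : ∀ j, K j → Type*} [∀ j k, Fintype (L j k)] [∀ j k, Nonempty (L j k)]
    (xLB xUB : Fin n → ℝ) (G : J → Set (Fin n → ℝ))
    (H : ∀ j, ∀ k : K j, L j k → Set (Fin n → ℝ)) :
    {x : Fin n → ℝ | (xLB ≤ x ∧ x ≤ xUB) ∧
        ∃ j, x ∈ G j ∧ ∀ k : K j, ∃ l : L j k, x ∈ H j k l} =
    {x : Fin n → ℝ | (xLB ≤ x ∧ x ≤ xUB) ∧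
        ∃ (Y : J → Bool) (W : ∀ j, ∀ k : K j, Option (L j k) → Bool),
          (Finset.univ.filter (fun j => Y j = true)).card = 1 ∧
          (∀ j (k : K j),
            (Finset.univ.filter (fun l : Option (L j k) => W j k l = true)).card = 1) ∧
          (∀ j (k : K j),
            (Finset.univ.filter (fun l : L j k => W j k (some l) = true)).card =
              (if Y j = true then 1 else 0)) ∧
          (∀ j, Y j = true → x ∈ G j) ∧
          (∀ j (k : K j) (l : L j k), W j k (some l) = true → x ∈ H j k l) ∧
          (∀ j (k : K j), W j k none = true → (xLB ≤ x ∧ x ≤ xUB))} := by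
  classical
  ext x
  simp only [Set.mem_setOf_eq]
  refine and_congr_right fun hx => ⟨?_, ?_⟩
  · rintro ⟨j₀, hG, hH⟩
    have hs : ∀ j (k : K j), ∃ s : Option (L j k),
        (j = j₀ → ∃ l, s = some l ∧ x ∈ H j k l) ∧ (j ≠ j₀ → s = none) := by
      intro j k
      by_cases h : j = j₀
      · subst h
        obtain ⟨l, hl⟩ := hH k
        exact ⟨some l, fun _ => ⟨l, rfl, hl⟩, fun h => absurd rfl h⟩
      · exact ⟨none, fun h' => absurd h' h, fun _ => rfl⟩
    choose s hs1 hs2 using hs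
    refine ⟨fun j => decide (j = j₀), fun j k l => decide (l = s j k), ?_, ?_, ?_, ?_, ?_, ?_⟩
    · rw [Finset.card_eq_one]
      exact ⟨j₀, by ext; simp⟩
    · intro j k
      rw [Finset.card_eq_one]
      exact ⟨s j k, by ext; simp⟩
    · intro j k
      by_cases h : j = j₀
      · obtain ⟨l, hl, -⟩ := hs1 j k h
        simp only [h, decide_true, if_true]
        rw [Finset.card_eq_one]
        exact ⟨l, by ext; simp [hl]⟩
      · simp [h, hs2 j k h]
    · intro j hj
      have : j = j₀ := by simpa using hj
      exact this ▸ hG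
    · intro j k l hl
      have hl' : some l = s j k := by simpa using hl
      by_cases h : j = j₀
      · obtain ⟨l', h1, h2⟩ := hs1 j k h
        rw [h1] at hl'
        cases hl'
        exact h2
      · rw [hs2 j k h] at hl'
        cases hl'
    · intro _ _ _
      exact hx
  · rintro ⟨Y, W, hY, -, hW, hG, hH, -⟩
    obtain ⟨j, hj⟩ := Finset.card_pos.mp (by rw [hY]; exact one_pos)
    have hj' : Y j = true := by simpa using hj
    refine ⟨j, hG j hj', fun k => ?_⟩
    have h1 := hW j k
    rw [if_pos hj'] at h1
    obtain ⟨l, hl⟩ := Finset.card_pos.mp (by rw [h1]; exact one_pos)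
    exact ⟨l, hH j k l (by simpa using hl)⟩
end
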